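/- Let d ≥ 2, α > −1 with p₀ := d/(1+α) > 1, and Δ > 1. Define u(x) = (−log|x|)^Δ for x ∈ ℝ^d with 0 < |x| < 1/e. Then there exist constants 0 < c₁ ≤ c₂ < ∞ (depending only on d, α, Δ) such that for all p ∈ (1, p₀): c₁ · (d − p(1+α))^{−Δ − 1/p} ≤ ( ∫_{|x|<1/e} ( u(x) · |x|^{−1−α} )^p dx )^{1/p} ≤ c₂ · (d − p(1+α))^{−Δ − 1/p}. -/

import Mathlib

open MeasureTheory Set ENNReal

/-!
In polar coordinates and with `r = exp (-t)`, the `p`-th power of the norm becomes the area of the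
unit sphere times the incomplete Gamma integral of `t ^ (Δ * p) * exp (-(ε * t))`, where
`ε = d - p * (1 + α)`. The complete integral is `Γ (Δ * p + 1) * ε ^ (-(Δ * p) - 1)`, and the window
`ε * t ∈ (D, D + 1)`, with `D` independent of `p`, already contributes a fixed multiple of
`ε ^ (-(Δ * p) - 1)`. Taking `p`-th roots moves the constants by a bounded amount because `1 ≤ p`.
-/

section IncompleteGamma

variable {s ε : ℝ}

lemma setLIntegral_Ioi_zero_rpow_mul_exp_neg_mul (hs : -1 < s) (hε : 0 < ε) :
    ∫⁻ t in Ioi (0 : ℝ), ENNReal.ofReal (t ^ s * Real.exp (-(ε * t))) =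
      ENNReal.ofReal (Real.Gamma (s + 1) * ε ^ (-s - 1)) := by
  have hintegrable : IntegrableOn (fun t ↦ t ^ s * Real.exp (-(ε * t))) (Ioi 0) := by
    simpa using integrableOn_rpow_mul_exp_neg_mul_rpow hs one_pos hε
  have hnonneg : 0 ≤ᵐ[volume.restrict (Ioi 0)] fun t ↦ t ^ s * Real.exp (-(ε * t)) :=
    ae_restrict_of_forall_mem measurableSet_Ioi fun t (ht : 0 < t) ↦ by positivity
  have hintegral := Real.integral_rpow_mul_exp_neg_mul_Ioi (a := s + 1) (by linarith) hε
  rw [add_sub_cancel_right] at hintegral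
  rw [← ofReal_integral_eq_lintegral_ofReal hintegrable hnonneg, hintegral, one_div,
    Real.inv_rpow hε.le, ← Real.rpow_neg hε.le, neg_add', mul_comm]

lemma inv_mul_rpow_neg_le_rpow {D t : ℝ} (hs : -1 ≤ s) (hε : 0 < ε) (h₁ : 1 ≤ ε * t)
    (hD : ε * t ≤ D) : D⁻¹ * ε ^ (-s) ≤ t ^ s := by
  have ht : 0 ≤ t := (pos_of_mul_pos_right (one_pos.trans_le h₁) hε.le).le
  calc
    D⁻¹ * ε ^ (-s) ≤ (ε * t) ^ s * ε ^ (-s) := by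
      gcongr
      calc
        D⁻¹ ≤ (ε * t)⁻¹ := by gcongr
        _ = (ε * t) ^ (-1 : ℝ) := (Real.rpow_neg_one _).symm
        _ ≤ (ε * t) ^ s := Real.rpow_le_rpow_of_exponent_le h₁ hs
    _ = t ^ s := by
      rw [Real.mul_rpow hε.le ht, mul_right_comm, ← Real.rpow_add hε, add_neg_cancel,
        Real.rpow_zero, one_mul]

lemma le_setLIntegral_Ioi_rpow_mul_exp_neg_mul {a D : ℝ} (hs : -1 ≤ s) (hε : 0 < ε) (hD : 1 ≤ D)
    (haD : ε * a ≤ D) :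
    ENNReal.ofReal ((D + 1)⁻¹ * Real.exp (-(D + 1)) * ε ^ (-s - 1)) ≤
      ∫⁻ t in Ioi a, ENNReal.ofReal (t ^ s * Real.exp (-(ε * t))) := by
  calc
    ENNReal.ofReal ((D + 1)⁻¹ * Real.exp (-(D + 1)) * ε ^ (-s - 1))
      = ∫⁻ _ in Ioo (D / ε) ((D + 1) / ε),
          ENNReal.ofReal ((D + 1)⁻¹ * ε ^ (-s) * Real.exp (-(D + 1))) := by
        have hlength : (D + 1) / ε - D / ε = ε⁻¹ := by ring
        rw [setLIntegral_const, Real.volume_Ioo, ← ENNReal.ofReal_mul (by positivity), hlength,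
          Real.rpow_sub_one hε.ne']
        ring_nf
    _ ≤ ∫⁻ t in Ioo (D / ε) ((D + 1) / ε), ENNReal.ofReal (t ^ s * Real.exp (-(ε * t))) := by
        refine setLIntegral_mono' measurableSet_Ioo fun t ht ↦ ENNReal.ofReal_le_ofReal ?_
        have hlower : D < ε * t := (div_lt_iff₀' hε).1 ht.1
        have hupper : ε * t < D + 1 := (lt_div_iff₀' hε).1 ht.2
        have ht₀ : 0 < t := pos_of_mul_pos_right (by linarith) hε.le
        have hrpow := inv_mul_rpow_neg_le_rpow hs hε (hD.trans hlower.le) hupper.le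
        gcongr
    _ ≤ _ := lintegral_mono_set fun t ht ↦ ((le_div_iff₀' hε).2 haD).trans_lt ht.1

end IncompleteGamma

section GammaBound

variable {Δ p q : ℝ}

lemma neg_one_lt_mul_of_le (hΔ : -1 < Δ * q) (hp : 0 ≤ p) (hpq : p ≤ q) : -1 < Δ * p := by
  rcases le_total 0 Δ with h | h
  · linarith [mul_nonneg h hp]
  · linarith [mul_le_mul_of_nonpos_left hpq h]

lemma Gamma_mul_add_one_le_max (hΔ : -1 < Δ * q) (hp : 1 ≤ p) (hpq : p ≤ q) :
    Real.Gamma (Δ * p + 1) ≤ max (Real.Gamma (Δ + 1)) (Real.Gamma (Δ * q + 1)) := by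
  have hΔ₁ : -1 < Δ * 1 := neg_one_lt_mul_of_le hΔ zero_le_one (hp.trans hpq)
  refine Real.convexOn_Gamma.le_on_segment (mem_Ioi.2 (by linarith)) (mem_Ioi.2 (by linarith)) ?_
  rw [segment_eq_uIcc, mem_uIcc]
  rcases le_total 0 Δ with h | h
  · exact .inl ⟨by nlinarith, by gcongr⟩
  · exact .inr ⟨by nlinarith, by nlinarith⟩

end GammaBound

section Root

variable {A ε Δ p : ℝ} {I : ℝ≥0∞}

lemma min_one_le_rpow {y : ℝ} (hA : 0 ≤ A) (hy₀ : 0 ≤ y) (hy₁ : y ≤ 1) : min 1 A ≤ A ^ y := by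
  rcases le_total 1 A with h | h
  · exact (min_le_left _ _).trans (Real.one_le_rpow h hy₀)
  · exact (min_le_right _ _).trans (Real.self_le_rpow_of_le_one hA h hy₁)

lemma rpow_le_max_one {y : ℝ} (hA : 0 ≤ A) (hy₀ : 0 ≤ y) (hy₁ : y ≤ 1) : A ^ y ≤ max 1 A := by
  rcases le_total 1 A with h | h
  · exact (Real.rpow_le_self_of_one_le h hy₁).trans (le_max_right _ _)
  · exact (Real.rpow_le_one hA h hy₀).trans (le_max_left _ _)

lemma ofReal_mul_rpow_rpow_one_div (hA : 0 ≤ A) (hε : 0 ≤ ε) (hp : 0 < p) :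
    ENNReal.ofReal (A * ε ^ (-(Δ * p) - 1)) ^ (1 / p) =
      ENNReal.ofReal (A ^ (1 / p) * ε ^ (-Δ - 1 / p)) := by
  have hexponent : (-(Δ * p) - 1) * (1 / p) = -Δ - 1 / p := by field_simp
  rw [ENNReal.ofReal_rpow_of_nonneg (by positivity) (by positivity),
    Real.mul_rpow hA (by positivity), ← Real.rpow_mul hε, hexponent]

lemma ofReal_min_one_mul_rpow_le_rpow_one_div (hA : 0 ≤ A) (hε : 0 ≤ ε) (hp : 1 ≤ p)
    (hI : ENNReal.ofReal (A * ε ^ (-(Δ * p) - 1)) ≤ I) :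
    ENNReal.ofReal (min 1 A * ε ^ (-Δ - 1 / p)) ≤ I ^ (1 / p) := by
  have hp₀ : 0 < p := one_pos.trans_le hp
  calc
    ENNReal.ofReal (min 1 A * ε ^ (-Δ - 1 / p))
      ≤ ENNReal.ofReal (A ^ (1 / p) * ε ^ (-Δ - 1 / p)) := by
        gcongr
        exact min_one_le_rpow hA (by positivity) ((div_le_one hp₀).2 hp)
    _ = ENNReal.ofReal (A * ε ^ (-(Δ * p) - 1)) ^ (1 / p) :=
        (ofReal_mul_rpow_rpow_one_div hA hε hp₀).symm
    _ ≤ I ^ (1 / p) := by gcongr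

lemma rpow_one_div_le_ofReal_max_one_mul_rpow (hA : 0 ≤ A) (hε : 0 ≤ ε) (hp : 1 ≤ p)
    (hI : I ≤ ENNReal.ofReal (A * ε ^ (-(Δ * p) - 1))) :
    I ^ (1 / p) ≤ ENNReal.ofReal (max 1 A * ε ^ (-Δ - 1 / p)) := by
  have hp₀ : 0 < p := one_pos.trans_le hp
  calc
    I ^ (1 / p) ≤ ENNReal.ofReal (A * ε ^ (-(Δ * p) - 1)) ^ (1 / p) := by gcongr
    _ = ENNReal.ofReal (A ^ (1 / p) * ε ^ (-Δ - 1 / p)) :=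
        ofReal_mul_rpow_rpow_one_div hA hε hp₀
    _ ≤ ENNReal.ofReal (max 1 A * ε ^ (-Δ - 1 / p)) := by
        gcongr
        exact rpow_le_max_one hA (by positivity) ((div_le_one hp₀).2 hp)

end Root

section RadialWeight

variable {E : Type*} [NormedAddCommGroup E] [NormedSpace ℝ E] [FiniteDimensional ℝ E]
  [Nontrivial E] [MeasurableSpace E] [BorelSpace E] (μ : Measure E) [μ.IsAddHaarMeasure]

lemma lintegral_fun_norm_addHaar {f : ℝ → ℝ≥0∞} (hf : Measurable f) :
    ∫⁻ x, f ‖x‖ ∂μ = μ.toSphere univ *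
      ∫⁻ r in Ioi (0 : ℝ), ENNReal.ofReal (r ^ (Module.finrank ℝ E - 1)) * f r := by
  calc
    ∫⁻ x, f ‖x‖ ∂μ = ∫⁻ x : ({0}ᶜ : Set E), f ‖x.1‖ ∂(μ.comap (↑)) := by
      rw [lintegral_subtype_comap (measurableSet_singleton _).compl (fun x ↦ f ‖x‖),
        restrict_compl_singleton]
    _ = ∫⁻ x, f x.2 ∂μ.toSphere.prod (.volumeIoiPow (Module.finrank ℝ E - 1)) := by
      simpa using μ.measurePreserving_homeomorphUnitSphereProd.lintegral_comp_emb
        (Homeomorph.measurableEmbedding _) (f ∘ Subtype.val ∘ Prod.snd)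
    _ = μ.toSphere univ *
        ∫⁻ r : Ioi (0 : ℝ), f r ∂.volumeIoiPow (Module.finrank ℝ E - 1) := by
      rw [lintegral_prod _ (by fun_prop)]
      simp [mul_comm]
    _ = _ := by
      rw [Measure.volumeIoiPow, lintegral_withDensity_eq_lintegral_mul _ (by fun_prop)
        (by fun_prop)]
      congr 1
      exact lintegral_subtype_comap measurableSet_Ioi
        (fun r ↦ ENNReal.ofReal (r ^ (Module.finrank ℝ E - 1)) * f r)

lemma setLIntegral_ball_fun_norm_addHaar {f : ℝ → ℝ≥0∞} (hf : Measurable f) (R : ℝ) :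
    ∫⁻ x in Metric.ball 0 R, f ‖x‖ ∂μ = μ.toSphere univ *
      ∫⁻ r in Ioo 0 R, ENNReal.ofReal (r ^ (Module.finrank ℝ E - 1)) * f r := by
  calc
    ∫⁻ x in Metric.ball 0 R, f ‖x‖ ∂μ = ∫⁻ x, (Iio R).indicator f ‖x‖ ∂μ := by
      rw [← lintegral_indicator measurableSet_ball]
      simp [indicator]
    _ = μ.toSphere univ * ∫⁻ r in Ioi (0 : ℝ), (Iio R).indicator
          (fun r ↦ ENNReal.ofReal (r ^ (Module.finrank ℝ E - 1)) * f r) r := by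
      simp only [lintegral_fun_norm_addHaar μ (hf.indicator measurableSet_Iio), indicator_mul_right]
    _ = _ := by
      rw [setLIntegral_indicator measurableSet_Iio, inter_comm, Ioi_inter_Iio]

lemma setLIntegral_Ioo_zero_eq_setLIntegral_exp_neg (f : ℝ → ℝ≥0∞) {R : ℝ} (hR : 0 < R) :
    ∫⁻ r in Ioo 0 R, f r =
      ∫⁻ t in Ioi (-Real.log R), ENNReal.ofReal (Real.exp (-t)) * f (Real.exp (-t)) := by
  have himage : (fun t ↦ Real.exp (-t)) '' Ioi (-Real.log R) = Ioo 0 R := by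
    rw [← image_image Real.exp Neg.neg, image_neg_Ioi, neg_neg, Real.image_exp_Iio,
      Real.exp_log hR]
  have hderiv (t : ℝ) : HasDerivAt (fun t ↦ Real.exp (-t)) (-Real.exp (-t)) t := by
    simpa using (hasDerivAt_neg t).exp
  have hanti : Antitone fun t ↦ Real.exp (-t) :=
    Real.exp_monotone.comp_antitone fun _ _ ↦ neg_le_neg
  rw [← himage, lintegral_image_eq_lintegral_deriv_mul_of_antitoneOn measurableSet_Ioi
    (fun t _ ↦ (hderiv t).hasDerivWithinAt) (hanti.antitoneOn _)]
  simp only [neg_neg]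

lemma setLIntegral_ball_fun_norm_eq_setLIntegral_exp_neg {f : ℝ → ℝ≥0∞} (hf : Measurable f)
    {R : ℝ} (hR : 0 < R) :
    ∫⁻ x in Metric.ball 0 R, f ‖x‖ ∂μ = μ.toSphere univ * ∫⁻ t in Ioi (-Real.log R),
      ENNReal.ofReal (Real.exp (-(Module.finrank ℝ E * t))) * f (Real.exp (-t)) := by
  rw [setLIntegral_ball_fun_norm_addHaar μ hf, setLIntegral_Ioo_zero_eq_setLIntegral_exp_neg _ hR]
  congr! 3 with t
  rw [← mul_assoc, ← ENNReal.ofReal_mul (Real.exp_nonneg _),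
    mul_pow_sub_one Module.finrank_pos.ne', ← Real.exp_nat_mul, mul_neg]

lemma setLIntegral_ball_log_rpow_mul_rpow {R : ℝ} (hR₀ : 0 < R) (hR₁ : R ≤ 1) (Δ β p : ℝ) :
    ∫⁻ x in Metric.ball 0 R, ENNReal.ofReal (((-Real.log ‖x‖) ^ Δ * ‖x‖ ^ (-β)) ^ p) ∂μ =
      μ.toSphere univ * ∫⁻ t in Ioi (-Real.log R), ENNReal.ofReal
        (t ^ (Δ * p) * Real.exp (-((Module.finrank ℝ E - p * β) * t))) := by
  rw [setLIntegral_ball_fun_norm_eq_setLIntegral_exp_neg μ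
    (f := fun r ↦ ENNReal.ofReal (((-Real.log r) ^ Δ * r ^ (-β)) ^ p)) (by fun_prop) hR₀]
  congr 1
  refine setLIntegral_congr_fun measurableSet_Ioi fun t (ht : -Real.log R < t) ↦ ?_
  have ht₀ : 0 ≤ t := by linarith [Real.log_nonpos hR₀.le hR₁]
  have hweight : ((-Real.log (Real.exp (-t))) ^ Δ * Real.exp (-t) ^ (-β)) ^ p =
      t ^ (Δ * p) * Real.exp (p * β * t) := by
    rw [Real.log_exp, neg_neg, Real.mul_rpow (by positivity) (by positivity), ← Real.rpow_mul ht₀,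
      ← Real.exp_mul, ← Real.exp_mul]
    ring_nf
  simp only [hweight]
  rw [← ENNReal.ofReal_mul (by positivity), mul_left_comm, ← Real.exp_add]
  ring_nf

variable {R β Δ p : ℝ}

lemma le_setLIntegral_ball_log_rpow_mul_rpow {D : ℝ} (hR₀ : 0 < R) (hR₁ : R ≤ 1)
    (hΔ : -1 ≤ Δ * p) (hpβ : p * β < Module.finrank ℝ E) (hD : 1 ≤ D)
    (hRD : (Module.finrank ℝ E - p * β) * -Real.log R ≤ D) :
    ENNReal.ofReal (μ.toSphere.real univ * ((D + 1)⁻¹ * Real.exp (-(D + 1))) *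
        (Module.finrank ℝ E - p * β) ^ (-(Δ * p) - 1)) ≤
      ∫⁻ x in Metric.ball 0 R, ENNReal.ofReal (((-Real.log ‖x‖) ^ Δ * ‖x‖ ^ (-β)) ^ p) ∂μ := by
  rw [setLIntegral_ball_log_rpow_mul_rpow μ hR₀ hR₁, mul_assoc,
    ENNReal.ofReal_mul measureReal_nonneg, ofReal_measureReal]
  gcongr
  exact le_setLIntegral_Ioi_rpow_mul_exp_neg_mul hΔ (sub_pos.2 hpβ) hD hRD

lemma setLIntegral_ball_log_rpow_mul_rpow_le (hR₀ : 0 < R) (hR₁ : R ≤ 1) (hΔ : -1 < Δ * p)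
    (hpβ : p * β < Module.finrank ℝ E) :
    ∫⁻ x in Metric.ball 0 R, ENNReal.ofReal (((-Real.log ‖x‖) ^ Δ * ‖x‖ ^ (-β)) ^ p) ∂μ ≤
      ENNReal.ofReal (μ.toSphere.real univ * Real.Gamma (Δ * p + 1) *
        (Module.finrank ℝ E - p * β) ^ (-(Δ * p) - 1)) := by
  rw [setLIntegral_ball_log_rpow_mul_rpow μ hR₀ hR₁, mul_assoc,
    ENNReal.ofReal_mul measureReal_nonneg, ofReal_measureReal,
    ← setLIntegral_Ioi_zero_rpow_mul_exp_neg_mul hΔ (sub_pos.2 hpβ)]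
  gcongr
  exact neg_nonneg.2 (Real.log_nonpos hR₀.le hR₁)

theorem u_weight_estimate_general (hR₀ : 0 < R) (hR₁ : R ≤ 1) (hβ : 0 < β)
    (hΔ : -1 < Δ * (Module.finrank ℝ E / β)) :
    ∃ c₁ c₂ : ℝ, 0 < c₁ ∧ c₁ ≤ c₂ ∧ ∀ p : ℝ, 1 ≤ p → p < Module.finrank ℝ E / β →
      ENNReal.ofReal (c₁ * (Module.finrank ℝ E - p * β) ^ (-Δ - 1 / p)) ≤
        (∫⁻ x in Metric.ball 0 R,
          ENNReal.ofReal (((-Real.log ‖x‖) ^ Δ * ‖x‖ ^ (-β)) ^ p) ∂μ) ^ (1 / p) ∧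
      (∫⁻ x in Metric.ball 0 R,
          ENNReal.ofReal (((-Real.log ‖x‖) ^ Δ * ‖x‖ ^ (-β)) ^ p) ∂μ) ^ (1 / p) ≤
        ENNReal.ofReal (c₂ * (Module.finrank ℝ E - p * β) ^ (-Δ - 1 / p)) := by
  set n := (Module.finrank ℝ E : ℝ)
  set D := max 1 (n * -Real.log R)
  set A := μ.toSphere.real univ * ((D + 1)⁻¹ * Real.exp (-(D + 1)))
  set G := max (Real.Gamma (Δ + 1)) (Real.Gamma (Δ * (n / β) + 1))
  have hD : 1 ≤ D := le_max_left _ _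
  have : NeZero μ.toSphere := ⟨μ.toSphere_ne_zero⟩
  have hA : 0 < A := mul_pos measureReal_univ_pos (by positivity)
  have hG : 0 < G := lt_max_of_lt_right (Real.Gamma_pos_of_pos (by linarith))
  refine ⟨min 1 A, max 1 (μ.toSphere.real univ * G), by positivity,
    (min_le_left _ _).trans (le_max_left _ _), fun p hp hpn ↦ ?_⟩
  have hpβ : p * β < n := (lt_div_iff₀ hβ).1 hpn
  have hε : 0 < n - p * β := sub_pos.2 hpβ
  have hΔp : -1 < Δ * p := neg_one_lt_mul_of_le hΔ (by positivity) hpn.le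
  have hRD : (n - p * β) * -Real.log R ≤ D := by
    refine le_max_of_le_right (mul_le_mul_of_nonneg_right (sub_le_self n (by positivity)) ?_)
    exact neg_nonneg.2 (Real.log_nonpos hR₀.le hR₁)
  constructor
  · exact ofReal_min_one_mul_rpow_le_rpow_one_div hA.le hε.le hp
      (le_setLIntegral_ball_log_rpow_mul_rpow μ hR₀ hR₁ hΔp.le hpβ hD hRD)
  · refine rpow_one_div_le_ofReal_max_one_mul_rpow (by positivity) hε.le hp
      ((setLIntegral_ball_log_rpow_mul_rpow_le μ hR₀ hR₁ hΔp hpβ).trans ?_)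
    gcongr
    exact Gamma_mul_add_one_le_max hΔ hp hpn.le

end RadialWeight

/-- For `d ≥ 2`, `α > −1` with `p₀ = d/(1+α) > 1` and `Δ > 1`, the function
`u(x) = (−log|x|)^Δ` on `0 < |x| < 1/e` satisfies: for all `p ∈ (1, p₀)` the weighted
norm `( ∫_{|x|<1/e} (u(x)·|x|^{−1−α})^p dx )^{1/p}` is comparable (with constants
depending only on `d, α, Δ`) to `(d − p(1+α))^{−Δ − 1/p}`. -/
theorem u_weight_estimate (d : ℕ) (hd : 2 ≤ d) (α Δ : ℝ) (hα : -1 < α)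
    (hp₀ : 1 < (d : ℝ) / (1 + α)) (hΔ : 1 < Δ) :
    ∃ c₁ c₂ : ℝ, 0 < c₁ ∧ c₁ ≤ c₂ ∧
      ∀ p : ℝ, 1 < p → p < (d : ℝ) / (1 + α) →
        ENNReal.ofReal (c₁ * ((d : ℝ) - p * (1 + α)) ^ (-Δ - 1 / p))
          ≤ (∫⁻ x in {x : EuclideanSpace ℝ (Fin d) | ‖x‖ < 1 / Real.exp 1},
              ENNReal.ofReal (((-Real.log ‖x‖) ^ Δ * ‖x‖ ^ (-1 - α)) ^ p)) ^ (1 / p) ∧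
        (∫⁻ x in {x : EuclideanSpace ℝ (Fin d) | ‖x‖ < 1 / Real.exp 1},
              ENNReal.ofReal (((-Real.log ‖x‖) ^ Δ * ‖x‖ ^ (-1 - α)) ^ p)) ^ (1 / p)
          ≤ ENNReal.ofReal (c₂ * ((d : ℝ) - p * (1 + α)) ^ (-Δ - 1 / p)) := by
  have : Nonempty (Fin d) := ⟨⟨0, by omega⟩⟩
  obtain ⟨c₁, c₂, hc₁, hc, hbound⟩ :=
    u_weight_estimate_general (volume : Measure (EuclideanSpace ℝ (Fin d))) (R := 1 / Real.exp 1)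
      (Δ := Δ) (by positivity) (by simp [inv_le_one_iff₀]) (neg_lt_iff_pos_add'.1 hα)
      (by rw [finrank_euclideanSpace_fin]; nlinarith)
  simp only [neg_add', finrank_euclideanSpace_fin, ball_zero_eq] at hbound
  exact ⟨c₁, c₂, hc₁, hc, fun p hp ↦ hbound p hp.le⟩
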